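/- arXiv:1510.00974 — 6 statements merged into one kernel-verified Lean document; each statement's English description precedes it below -/
import Mathlib

section
/- Let A be a C*-algebra, let a, b ∈ A be positive elements, and let ε > 0 be such that ‖a − b‖ < ε. Then (a − ε)₊ ≼ b; explicitly, there exist an element x₁ ∈ A with 0 ≤ x₁ ≤ b and a finite family z₁, …, z_n ∈ A such that (a − ε)₊ = Σᵢ zᵢ*zᵢ and x₁ = Σᵢ zᵢzᵢ*. (In fact a single element z ∈ A with (a − ε)₊ = z z* and z*z ≤ b suffices.) -/
open Filter Topology

lemma cfcₙ_mul_id_mul {A : Type*} [NonUnitalCStarAlgebra A] {p : A} (hp : IsSelfAdjoint p)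
    {f : ℝ → ℝ} (hf : Continuous f) (hf0 : f 0 = 0) :
    cfcₙ (fun t => f t * t * f t) p = cfcₙ f p * p * cfcₙ f p := by
  rw [cfcₙ_mul (fun t => f t * t) f p (by fun_prop) (by simp) (by fun_prop) hf0,
    cfcₙ_mul f (fun t => t) p (by fun_prop) hf0 (by fun_prop) rfl, cfcₙ_id' ℝ p]

section

variable {A : Type*} [NonUnitalCStarAlgebra A] [PartialOrder A] [StarOrderedRing A]

/-- If `s * star s ≤ p` then `‖r * s‖ ^ 2 ≤ ‖r * p * star r‖`. -/
lemma norm_mul_sq_le_of_mul_star_le {s p : A} (h : s * star s ≤ p) (r : A) :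
    ‖r * s‖ ^ 2 ≤ ‖r * p * star r‖ := by
  rw [sq, ← CStarRing.norm_self_mul_star]
  refine CStarAlgebra.norm_le_norm_of_nonneg_of_le (mul_star_self_nonneg _) ?_
  simpa [mul_assoc] using star_right_conjugate_le_conjugate h r

/-- The analogue of `norm_mul_sq_le_of_mul_star_le` for the multiplier `1 - q`. -/
lemma norm_sub_mul_sq_le_of_mul_star_le {s p : A} (h : s * star s ≤ p) (q : A) :
    ‖s - q * s‖ ^ 2 ≤ ‖p - q * p - p * star q + q * p * star q‖ := by
  rw [sq, ← CStarRing.norm_self_mul_star]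
  refine CStarAlgebra.norm_le_norm_of_nonneg_of_le (mul_star_self_nonneg _) ?_
  obtain ⟨w, hw⟩ := CStarAlgebra.nonneg_iff_eq_star_mul_self.mp (sub_nonneg.mpr h)
  rw [sub_eq_iff_eq_add] at hw
  rw [← sub_nonneg]
  have key : p - q * p - p * star q + q * p * star q - (s - q * s) * star (s - q * s) =
      star (w - w * star q) * (w - w * star q) := by
    rw [hw]
    simp only [star_sub, star_mul, star_star]
    noncomm_ring
  rw [key]
  exact star_mul_self_nonneg _

/-- A bound for `y * d(star y * y) * s` in terms of `t * d t`, when `s * star s ≤ star y * y`. -/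
lemma norm_mul_cfcₙ_mul_le {s y : A} (h : s * star s ≤ star y * y) {d : ℝ → ℝ} (hd : Continuous d)
    (hd0 : d 0 = 0) {C : ℝ} (hC : 0 ≤ C) (hdC : ∀ t, 0 ≤ t → |t * d t| ≤ C) :
    ‖y * cfcₙ d (star y * y) * s‖ ≤ C := by
  obtain ⟨p, hp⟩ : ∃ p, p = star y * y := ⟨_, rfl⟩
  rw [← hp] at h ⊢
  have hp0 : 0 ≤ p := hp ▸ star_mul_self_nonneg y
  have hps : IsSelfAdjoint p := .of_nonneg hp0
  have hσ : ∀ t ∈ quasispectrum ℝ p, 0 ≤ t := quasispectrum_nonneg_of_nonneg p hp0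
  have hD : IsSelfAdjoint (cfcₙ d p) := cfcₙ_predicate _ _
  obtain ⟨r, hr_def⟩ : ∃ r, r = cfcₙ (fun t => √t * d t) p := ⟨_, rfl⟩
  have hr : IsSelfAdjoint r := hr_def ▸ cfcₙ_predicate _ _
  have hrr : r * r = cfcₙ d p * p * cfcₙ d p := by
    rw [hr_def, ← cfcₙ_mul_id_mul hps hd hd0,
      ← cfcₙ_mul _ _ p (by fun_prop) (by simp) (by fun_prop) (by simp)]
    refine cfcₙ_congr fun t ht => ?_
    have := Real.mul_self_sqrt (hσ t ht)
    linear_combination (d t * d t) * this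
  have hnorm : ‖y * cfcₙ d p * s‖ = ‖r * s‖ := by
    rw [← sq_eq_sq₀ (norm_nonneg _) (norm_nonneg _), sq, sq, ← CStarRing.norm_star_mul_self,
      ← CStarRing.norm_star_mul_self (x := r * s)]
    have e : star (r * s) * (r * s) = star s * (r * r) * s := by
      rw [star_mul, hr.star_eq]; noncomm_ring
    rw [e, hrr, star_mul, star_mul, hD.star_eq]
    generalize cfcₙ d p = D
    simp only [hp, mul_assoc]
  rw [hnorm]
  refine (sq_le_sq₀ (norm_nonneg _) hC).mp ((norm_mul_sq_le_of_mul_star_le h r).trans ?_)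
  rw [hr.star_eq, hr_def, ← cfcₙ_mul_id_mul hps (by fun_prop) (by simp)]
  refine norm_cfcₙ_le fun t ht => ?_
  have e : (√t * d t) * t * (√t * d t) = (t * d t) ^ 2 := by
    have := Real.mul_self_sqrt (hσ t ht)
    linear_combination (d t * d t * t) * this
  rw [e, Real.norm_of_nonneg (sq_nonneg _), sq_le_sq, abs_of_nonneg hC]
  exact hdC t (hσ t ht)

/-- `k(p)` is almost a left unit for `s` when `s * star s ≤ p` and `t * (1 - k t)` is small. -/
lemma norm_sub_cfcₙ_mul_sq_le {s p : A} (hp : 0 ≤ p) (h : s * star s ≤ p) {k : ℝ → ℝ}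
    (hk : Continuous k) (hk0 : k 0 = 0) {C : ℝ} (hk01 : ∀ t, 0 ≤ t → k t ∈ Set.Icc 0 1)
    (hkC : ∀ t, 0 ≤ t → t * (1 - k t) ≤ C) : ‖s - cfcₙ k p * s‖ ^ 2 ≤ C := by
  refine (norm_sub_mul_sq_le_of_mul_star_le h (cfcₙ k p)).trans ?_
  have hps : IsSelfAdjoint p := .of_nonneg hp
  have hK : IsSelfAdjoint (cfcₙ k p) := cfcₙ_predicate _ _
  have hid : cfcₙ (fun t : ℝ => t) p = p := cfcₙ_id' ℝ p
  have e : p - cfcₙ k p * p - p * star (cfcₙ k p) + cfcₙ k p * p * star (cfcₙ k p) =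
      cfcₙ (fun t => t - k t * t - t * k t + k t * t * k t) p := by
    rw [cfcₙ_add (fun t => t - k t * t - t * k t) (fun t => k t * t * k t) p
        (by fun_prop) (by simp) (by fun_prop) (by simp),
      cfcₙ_sub (fun t => t - k t * t) (fun t => t * k t) p
        (by fun_prop) (by simp) (by fun_prop) (by simp),
      cfcₙ_sub (fun t => t) (fun t => k t * t) p (by fun_prop) rfl (by fun_prop) (by simp),
      cfcₙ_mul_id_mul hps hk hk0, cfcₙ_mul k (fun t => t) p (by fun_prop) hk0 (by fun_prop) rfl,
      cfcₙ_mul (fun t => t) k p (by fun_prop) rfl (by fun_prop) hk0, hid, hK.star_eq]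
  rw [e]
  refine norm_cfcₙ_le fun t ht => ?_
  have ht := quasispectrum_nonneg_of_nonneg p hp t ht
  have h1 := hk01 t ht
  have e : t - k t * t - t * k t + k t * t * k t = t * (1 - k t) * (1 - k t) := by ring
  have h3 : 0 ≤ 1 - k t := sub_nonneg.mpr h1.2
  rw [e, Real.norm_of_nonneg (by positivity)]
  exact (mul_le_of_le_one_right (by positivity) (by linarith [h1.1])).trans (hkC t ht)

/-- A regularization of `t ↦ 1 / √t` on the positive half-line, vanishing at `0`. -/
noncomputable def regInvSqrt (η t : ℝ) : ℝ := √t / (|t| + η)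

lemma regInvSqrt_zero (η : ℝ) : regInvSqrt η 0 = 0 := by simp [regInvSqrt]

lemma continuous_regInvSqrt {η : ℝ} (hη : 0 < η) : Continuous (regInvSqrt η) := by
  unfold regInvSqrt
  exact Real.continuous_sqrt.div (by fun_prop) fun t => by positivity

lemma sqrt_sub_mul_regInvSqrt_mem {η t : ℝ} (hη : 0 < η) (ht : 0 ≤ t) :
    √t - t * regInvSqrt η t ∈ Set.Icc 0 (√η) := by
  obtain ⟨x, hx, rfl⟩ : ∃ x, 0 ≤ x ∧ t = x ^ 2 := ⟨√t, by positivity, by simp [ht]⟩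
  obtain ⟨y, hy, rfl⟩ : ∃ y, 0 < y ∧ η = y ^ 2 := ⟨√η, by positivity, by simp [hη.le]⟩
  simp only [regInvSqrt, abs_sq, Real.sqrt_sq hx, Real.sqrt_sq hy.le]
  have : x - x ^ 2 * (x / (x ^ 2 + y ^ 2)) = x * y ^ 2 / (x ^ 2 + y ^ 2) := by
    field_simp; ring
  rw [this]
  refine ⟨by positivity, ?_⟩
  rw [div_le_iff₀ (by positivity)]
  nlinarith [mul_nonneg hy.le (sq_nonneg (x - y)), mul_nonneg hy.le (sq_nonneg x), pow_pos hy 3,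
    mul_nonneg hx (sq_nonneg y), mul_nonneg hy.le (sq_nonneg (2 * x - y))]

lemma regInvSqrt_mul_mul_self {η t : ℝ} (ht : 0 ≤ t) :
    regInvSqrt η t * t * regInvSqrt η t = (t / (t + η)) ^ 2 := by
  rw [regInvSqrt, abs_of_nonneg ht]
  have := Real.mul_self_sqrt ht
  simp only [div_eq_mul_inv]
  linear_combination (t * (t + η)⁻¹ ^ 2) * this

lemma regInvSqrt_mul_mul_self_mem {η t : ℝ} (hη : 0 < η) (ht : 0 ≤ t) :
    regInvSqrt η t * t * regInvSqrt η t ∈ Set.Icc 0 1 := by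
  rw [regInvSqrt_mul_mul_self ht]
  exact ⟨by positivity, pow_le_one₀ (by positivity)
    (div_le_one_of_le₀ (by linarith) (by positivity))⟩

lemma mul_one_sub_regInvSqrt_sq_le {η t : ℝ} (hη : 0 < η) (ht : 0 ≤ t) :
    t * (1 - regInvSqrt η t * t * regInvSqrt η t) ≤ 2 * η := by
  rw [regInvSqrt_mul_mul_self ht]
  have : t * (1 - (t / (t + η)) ^ 2) = t * η * (2 * t + η) / (t + η) ^ 2 := by
    field_simp; ring
  rw [this, div_le_iff₀ (by positivity)]
  nlinarith [mul_nonneg ht hη.le, mul_nonneg (mul_nonneg ht hη.le) hη.le, pow_pos hη 3]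

/-- If `s` is self-adjoint and `s * s ≤ star y * y`, then `s * s` is of the form `star z * z`
with `z * star z ≤ y * star y`. -/
lemma exists_star_mul_self_eq_of_le {s y : A} (hs : IsSelfAdjoint s)
    (h : s * s ≤ star y * y) : ∃ z : A, s * s = star z * z ∧ z * star z ≤ y * star y := by
  obtain ⟨p, hp⟩ : ∃ p, p = star y * y := ⟨_, rfl⟩
  have hp0 : 0 ≤ p := hp ▸ star_mul_self_nonneg y
  have hσ : ∀ t ∈ quasispectrum ℝ p, 0 ≤ t := quasispectrum_nonneg_of_nonneg p hp0
  have hs' : s * star s ≤ p := by rwa [hs.star_eq, hp]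
  let η : ℕ → ℝ := fun n => 1 / ((n : ℝ) + 1)
  have hη : ∀ n, 0 < η n := fun n => by positivity
  have hη0 : Tendsto η atTop (𝓝 0) := tendsto_one_div_add_atTop_nhds_zero_nat
  have hanti : ∀ {m n}, m ≤ n → η n ≤ η m := fun hmn => Nat.one_div_le_one_div hmn
  let G : ℕ → A := fun n => cfcₙ (regInvSqrt (η n)) p
  have hc : ∀ n, Continuous (regInvSqrt (η n)) := fun n => continuous_regInvSqrt (hη n)
  have h0 : ∀ n, regInvSqrt (η n) 0 = 0 := fun n => regInvSqrt_zero _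
  have hG : ∀ n, IsSelfAdjoint (G n) := fun n => cfcₙ_predicate _ _
  let K : ℕ → A := fun n => cfcₙ (fun t => regInvSqrt (η n) t * t * regInvSqrt (η n) t) p
  have hK : ∀ n, IsSelfAdjoint (K n) := fun n => cfcₙ_predicate _ _
  have hGK : ∀ n, G n * p * G n = K n := fun n =>
    (cfcₙ_mul_id_mul (.of_nonneg hp0) (hc n) (h0 n)).symm
  have hKn : ∀ n, ‖K n‖ ≤ 1 := fun n => norm_cfcₙ_le fun t ht => by
    have := regInvSqrt_mul_mul_self_mem (hη n) (hσ t ht)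
    rw [Real.norm_of_nonneg this.1]
    exact this.2
  let u : ℕ → A := fun n => y * G n * s
  -- the approximants form a Cauchy sequence
  have hcauchy : CauchySeq u := by
    refine cauchySeq_of_le_tendsto_0 (fun n => √(η n)) (fun n m N hn hm => ?_) ?_
    · have e : u n - u m =
          y * cfcₙ (fun t => regInvSqrt (η n) t - regInvSqrt (η m) t) (star y * y) * s := by
        rw [cfcₙ_sub _ _ _ (hc n).continuousOn (h0 n) (hc m).continuousOn (h0 m), ← hp, mul_sub,
          sub_mul]
      rw [dist_eq_norm, e]
      refine norm_mul_cfcₙ_mul_le (hp ▸ hs') ((hc n).sub (hc m)) (by simp [h0])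
        (Real.sqrt_nonneg _) fun t ht => ?_
      have h1 := sqrt_sub_mul_regInvSqrt_mem (hη n) ht
      have h2 := sqrt_sub_mul_regInvSqrt_mem (hη m) ht
      have h3 := Real.sqrt_le_sqrt (hanti hn)
      have h4 := Real.sqrt_le_sqrt (hanti hm)
      rw [Pi.sub_apply, mul_sub, abs_le]
      constructor <;> linarith [h1.1, h1.2, h2.1, h2.2]
    · simpa using hη0.sqrt
  obtain ⟨z, hz⟩ := cauchySeq_tendsto_of_complete hcauchy
  refine ⟨z, ?_, ?_⟩
  · -- `star (u n) * u n = s * K n * s` tends to `s * s`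
    have hlim : Tendsto (fun n => s - K n * s) atTop (𝓝 0) := by
      have hb : Tendsto (fun n => √(2 * η n)) atTop (𝓝 0) := by
        simpa using (hη0.const_mul 2).sqrt
      refine squeeze_zero_norm (fun n => ?_) hb
      refine Real.le_sqrt_of_sq_le ?_
      exact norm_sub_cfcₙ_mul_sq_le hp0 hs' (((hc n).mul continuous_id').mul (hc n))
        (by simp) (fun t ht => regInvSqrt_mul_mul_self_mem (hη n) ht)
        fun t ht => mul_one_sub_regInvSqrt_sq_le (hη n) ht
    have hlim2 : Tendsto (fun n => star (u n) * u n) atTop (𝓝 (s * s)) := by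
      have : Tendsto (fun n => s * s - s * (s - K n * s)) atTop (𝓝 (s * s - s * 0)) :=
        tendsto_const_nhds.sub (hlim.const_mul s)
      rw [mul_zero, sub_zero] at this
      refine this.congr fun n => ?_
      simp only [u]
      rw [← hGK, hp, star_mul, star_mul, hs.star_eq, (hG n).star_eq]
      noncomm_ring
    exact tendsto_nhds_unique hlim2 (hz.star.mul hz)
  · refine le_of_tendsto' (hz.mul hz.star) fun n => ?_
    calc u n * star (u n) = (y * G n) * (s * star s) * star (y * G n) := by
          simp only [u, star_mul]; noncomm_ring
      _ ≤ (y * G n) * p * star (y * G n) := star_right_conjugate_le_conjugate hs' _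
      _ = y * K n * star y := by
          rw [← hGK, star_mul, (hG n).star_eq]; noncomm_ring
      _ ≤ ‖K n‖ • (y * star y) := CStarAlgebra.star_right_conjugate_le_norm_smul (hK n)
      _ ≤ (1 : ℝ) • (y * star y) := smul_le_smul_of_nonneg_right (hKn n) (mul_star_self_nonneg y)
      _ = y * star y := one_smul _ _

/-- If `‖a - b‖ < ε` then `(a - ε)₊ ≤ e * b * e` for a self-adjoint contraction `e`. -/
lemma exists_cutdown_le_conjugate {a b : A} (ha : 0 ≤ a) (hb : 0 ≤ b) {ε : ℝ}
    (hab : ‖a - b‖ < ε) : ∃ e : A, IsSelfAdjoint e ∧ ‖e‖ ≤ 1 ∧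
      cfcₙ (fun t : ℝ => max (t - ε) 0) a ≤ e * b * e := by
  obtain ⟨δ, hδ⟩ : ∃ δ, δ = ‖a - b‖ := ⟨_, rfl⟩
  rw [← hδ] at hab
  have hδ0 : 0 ≤ δ := hδ ▸ norm_nonneg _
  let f : ℝ → ℝ := fun t => √(max (t - ε) 0 / max (t - δ) (ε - δ))
  have hden : ∀ t, 0 < max (t - δ) (ε - δ) := fun t => lt_max_of_lt_right (sub_pos.mpr hab)
  have hfc : Continuous f :=
    (Continuous.div (by fun_prop) (by fun_prop) fun t => (hden t).ne').sqrt
  have hf0 : f 0 = 0 := by simp [f, max_eq_right (show -ε ≤ 0 by linarith)]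
  have hff : ∀ t, f t * t * f t - δ * (f t * f t) = max (t - ε) 0 := fun t => by
    have : f t * f t = max (t - ε) 0 / max (t - δ) (ε - δ) :=
      Real.mul_self_sqrt (div_nonneg (le_max_right _ _) (hden t).le)
    have e : f t * t * f t - δ * (f t * f t) = (f t * f t) * (t - δ) := by ring
    rw [e, this]
    rcases le_total t ε with ht | ht
    · simp [max_eq_right (sub_nonpos.mpr ht)]
    · rw [max_eq_left (b := ε - δ) (by linarith)]
      exact div_mul_cancel₀ _ (by linarith)
  have he : IsSelfAdjoint (cfcₙ f a) := cfcₙ_predicate _ _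
  refine ⟨cfcₙ f a, he, norm_cfcₙ_le fun t _ => ?_, ?_⟩
  · rw [Real.norm_of_nonneg (Real.sqrt_nonneg _)]
    refine Real.sqrt_le_one.mpr (div_le_one_of_le₀ ?_ (hden t).le)
    exact max_le (le_max_of_le_left (by linarith)) (hden t).le
  · have hcut : cfcₙ (fun t : ℝ => max (t - ε) 0) a =
        cfcₙ f a * a * cfcₙ f a - δ • (cfcₙ f a * cfcₙ f a) := by
      rw [← cfcₙ_congr (fun t _ => hff t),
        cfcₙ_sub (fun t => f t * t * f t) (fun t => δ * (f t * f t)) a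
          (by fun_prop) (by simp) (by fun_prop) (by simp [hf0]),
        cfcₙ_const_mul δ (fun t => f t * f t) a (by fun_prop) (by simp [hf0]),
        cfcₙ_mul_id_mul (.of_nonneg ha) hfc hf0,
        cfcₙ_mul f f a hfc.continuousOn hf0 hfc.continuousOn hf0]
    have hconj := CStarAlgebra.star_left_conjugate_le_norm_smul (a := cfcₙ f a) (b := a - b)
      ((IsSelfAdjoint.of_nonneg ha).sub (IsSelfAdjoint.of_nonneg hb))
    rw [he.star_eq, ← hδ, mul_sub, sub_mul] at hconj
    rw [hcut]
    exact sub_le_comm.mp hconj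

end

/-- `(a - ε)₊ ≼ b`: there exist `x₁` with `0 ≤ x₁ ≤ b` and a finite family `z i` with
`(a - ε)₊ = ∑ star (z i) * z i` and `x₁ = ∑ z i * star (z i)`, where `(a - ε)₊` is obtained
by applying the continuous functional calculus with `t ↦ max (t - ε) 0` to `a`. -/
theorem cutdown_subequivalent {A : Type*} [NonUnitalCStarAlgebra A] [PartialOrder A]
    [StarOrderedRing A] (a b : A) (ha : 0 ≤ a) (hb : 0 ≤ b) (ε : ℝ) (hε : 0 < ε)
    (hab : ‖a - b‖ < ε) :
    ∃ x₁ : A, 0 ≤ x₁ ∧ x₁ ≤ b ∧ ∃ (n : ℕ) (z : Fin n → A),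
      cfcₙ (fun t : ℝ => max (t - ε) 0) a = ∑ i, star (z i) * z i ∧
      x₁ = ∑ i, z i * star (z i) := by
  obtain ⟨e, he, he1, hle⟩ := exists_cutdown_le_conjugate ha hb hab
  obtain ⟨c, hc⟩ : ∃ c, c = cfcₙ (fun t : ℝ => max (t - ε) 0) a := ⟨_, rfl⟩
  have hc0 : 0 ≤ c := hc ▸ cfcₙ_nonneg fun t _ => le_max_right _ _
  have hss : CFC.sqrt c * CFC.sqrt c = c := CFC.sqrt_mul_sqrt_self c hc0
  have hbb : CFC.sqrt b * CFC.sqrt b = b := CFC.sqrt_mul_sqrt_self b hb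
  have hb' : IsSelfAdjoint (CFC.sqrt b) := IsSelfAdjoint.of_nonneg (CFC.sqrt_nonneg b)
  obtain ⟨z, hz, hzy⟩ := exists_star_mul_self_eq_of_le (s := CFC.sqrt c) (y := CFC.sqrt b * e)
    (IsSelfAdjoint.of_nonneg (CFC.sqrt_nonneg c)) (by
      have : star (CFC.sqrt b * e) * (CFC.sqrt b * e) = e * (CFC.sqrt b * CFC.sqrt b) * e := by
        rw [star_mul, he.star_eq, hb'.star_eq]; noncomm_ring
      rwa [hss, this, hbb, hc])
  refine ⟨z * star z, mul_star_self_nonneg z, hzy.trans ?_, 1, fun _ => z, ?_, by simp⟩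
  · have hee : ‖e * e‖ ≤ 1 := (norm_mul_le e e).trans (mul_le_one₀ he1 (norm_nonneg _) he1)
    calc CFC.sqrt b * e * star (CFC.sqrt b * e)
        = CFC.sqrt b * (e * e) * star (CFC.sqrt b) := by
          rw [star_mul, he.star_eq]; noncomm_ring
      _ ≤ ‖e * e‖ • (CFC.sqrt b * star (CFC.sqrt b)) :=
          CStarAlgebra.star_right_conjugate_le_norm_smul (by
            simpa [he.star_eq] using IsSelfAdjoint.mul_star_self e)
      _ ≤ (1 : ℝ) • (CFC.sqrt b * star (CFC.sqrt b)) :=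
          smul_le_smul_of_nonneg_right hee (mul_star_self_nonneg _)
      _ = b := by rw [one_smul, hb'.star_eq, hbb]
  · rw [← hc, ← hss, hz]
    simp
end

section
/- Let A be a C*-algebra and let φ be a lower semicontinuous trace on A. Set A₊^φ = {x ∈ A₊ : φ(x) < ∞} and let A^φ denote the linear span of A₊^φ. If p is a projection belonging to the closure of A^φ in A, then φ(p) < ∞. -/
open scoped ENNReal NNReal

/-- A `[0,∞]`-valued trace on a C*-algebra: positively homogeneous and additive on the
positive cone, and satisfying `φ (x* x) = φ (x x*)` for all `x`. -/
structure IsTrace {A : Type*} [NonUnitalCStarAlgebra A] [PartialOrder A] [StarOrderedRing A]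
    (φ : A → ℝ≥0∞) : Prop where
  smul : ∀ x : A, 0 ≤ x → ∀ α : ℝ≥0, φ ((α : ℝ) • x) = (α : ℝ≥0∞) * φ x
  add : ∀ x y : A, 0 ≤ x → 0 ≤ y → φ (x + y) = φ x + φ y
  tracial : ∀ x : A, φ (star x * x) = φ (x * star x)

/-- A trace is lower semicontinuous if for each finite `α`, the set of positive elements
with `φ x ≤ α` is closed. -/
def IsLSC {A : Type*} [NonUnitalCStarAlgebra A] [PartialOrder A] [StarOrderedRing A]
    (φ : A → ℝ≥0∞) : Prop :=
  ∀ α : ℝ≥0, IsClosed {x : A | 0 ≤ x ∧ φ x ≤ (α : ℝ≥0∞)}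

namespace IsTrace

variable {A : Type*} [NonUnitalCStarAlgebra A] [PartialOrder A] [StarOrderedRing A]
  {φ : A → ℝ≥0∞}

theorem mono (hφ : IsTrace φ) {x y : A} (hx : 0 ≤ x) (hxy : x ≤ y) : φ x ≤ φ y := by
  have h := hφ.add x (y - x) hx (sub_nonneg.2 hxy)
  rw [add_sub_cancel] at h
  exact h ▸ le_self_add

theorem smul_lt_top (hφ : IsTrace φ) {x : A} (hx : 0 ≤ x) (hfin : φ x < ∞) {r : ℝ}
    (hr : 0 ≤ r) : φ (r • x) < ∞ := by
  lift r to ℝ≥0 using hr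
  rw [hφ.smul x hx r]
  exact ENNReal.mul_lt_top ENNReal.coe_lt_top hfin

theorem conjugate_lt_top (hφ : IsTrace φ) {a : A} (ha : 0 ≤ a) (hfin : φ a < ∞) (b : A) :
    φ (star b * a * b) < ∞ := by
  set s := CFC.sqrt a
  have hs : star s = s := (IsSelfAdjoint.of_nonneg (CFC.sqrt_nonneg a)).star_eq
  have hss : s * s = a := CFC.sqrt_mul_sqrt_self a ha
  have hle : star s * (b * star b) * s ≤ ‖b * star b‖ • (star s * s) :=
    CStarAlgebra.star_left_conjugate_le_norm_smul
  have heq := hφ.tracial (s * b)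
  rw [show star (s * b) * (s * b) = star b * a * b by
      rw [star_mul, hs, ← hss]; simp only [mul_assoc],
    show s * b * star (s * b) = star s * (b * star b) * s by
      rw [star_mul, hs]; simp only [mul_assoc]] at heq
  rw [hs, hss] at hle
  rw [heq, hs]
  refine (hφ.mono ?_ hle).trans_lt (hφ.smul_lt_top ha hfin (norm_nonneg _))
  simpa only [hs] using star_left_conjugate_nonneg (mul_star_self_nonneg b) s

/-- The real part of every element of the span of the positive elements of finite trace is
dominated by a positive element of finite trace. -/
theorem exists_add_star_le_of_mem_span (hφ : IsTrace φ) {y : A}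
    (hy : y ∈ Submodule.span ℂ {x : A | 0 ≤ x ∧ φ x < ∞}) :
    ∃ a : A, 0 ≤ a ∧ φ a < ∞ ∧ y + star y ≤ a := by
  suffices h : ∀ c : ℂ, ∃ a : A, 0 ≤ a ∧ φ a < ∞ ∧ c • y + star (c • y) ≤ a by
    simpa using h 1
  induction hy using Submodule.span_induction with
  | mem x hx =>
    intro c
    have hr : 0 ≤ 2 * ‖c‖ := by positivity
    refine ⟨(2 * ‖c‖) • x, smul_nonneg hr hx.1, hφ.smul_lt_top hx.1 hx.2 hr, ?_⟩
    have heq : c • x + star (c • x) = (2 * c.re) • x := by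
      rw [star_smul, (IsSelfAdjoint.of_nonneg hx.1).star_eq, ← add_smul,
        ← Complex.coe_smul, Complex.star_def, Complex.add_conj]
    rw [heq]
    have hre := Complex.re_le_norm c
    exact smul_le_smul_of_nonneg_right (by linarith) hx.1
  | zero =>
    intro c
    have h0 : φ 0 = 0 := by simpa using hφ.smul 0 le_rfl 0
    exact ⟨0, le_rfl, by simp [h0], by simp⟩
  | add x y _ _ hx hy =>
    intro c
    obtain ⟨a, ha, hfa, hxa⟩ := hx c
    obtain ⟨b, hb, hfb, hyb⟩ := hy c
    refine ⟨a + b, add_nonneg ha hb, ?_, ?_⟩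
    · rw [hφ.add a b ha hb]
      exact ENNReal.add_lt_top.2 ⟨hfa, hfb⟩
    · rw [smul_add, star_add, add_add_add_comm]
      exact add_le_add hxa hyb
  | smul d x _ hx =>
    intro c
    simpa only [smul_smul] using hx (c * d)

end IsTrace

/-- If `φ` is a lower semicontinuous trace on a C*-algebra `A` and `p` is a projection
belonging to the closure of the linear span of `A₊^φ = {x ∈ A₊ : φ x < ∞}`, then
`φ p < ∞`. -/
theorem trace_finite_of_projection_mem_closure_span {A : Type*} [NonUnitalCStarAlgebra A]
    [PartialOrder A] [StarOrderedRing A] (φ : A → ℝ≥0∞) (hφ : IsTrace φ) (hlsc : IsLSC φ)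
    (p : A) (hp₁ : IsSelfAdjoint p) (hp₂ : p * p = p)
    (hp : p ∈ closure (Submodule.span ℂ {x : A | 0 ≤ x ∧ φ x < ∞} : Set A)) :
    φ p < ∞ := by
  obtain ⟨y, hy, hpy⟩ := Metric.mem_closure_iff.1 hp (1 / 2) (by norm_num)
  obtain ⟨a, ha, hfin, hya⟩ := hφ.exists_add_star_le_of_mem_span hy
  have hps : star p = p := hp₁
  have hp0 : 0 ≤ p := by simpa [hps, hp₂] using star_mul_self_nonneg p
  set d := (p - y) + star (p - y) with hd
  have hd_sa : IsSelfAdjoint d := IsSelfAdjoint.add_star_self (p - y)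
  have hd_norm : ‖d‖ ≤ 1 := by
    rw [dist_eq_norm] at hpy
    have h := norm_add_le (p - y) (star (p - y))
    rw [norm_star] at h
    linarith
  have hle : star p * d * p ≤ ‖d‖ • (star p * p) :=
    CStarAlgebra.star_left_conjugate_le_norm_smul
  have hdp : ‖d‖ • (star p * p) ≤ p := by
    simpa [hps, hp₂] using smul_le_smul_of_nonneg_right hd_norm hp0
  have hconj : star p * (y + star y) * p ≤ star p * a * p :=
    star_left_conjugate_le_conjugate hya p
  have heq : star p * d * p = p + p - star p * (y + star y) * p := by
    rw [hd, star_sub, hps, show p - y + (p - star y) = p + p - (y + star y) by abel,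
      mul_sub, sub_mul, mul_add, add_mul, hp₂, hp₂]
  have hpa : p ≤ star p * a * p := by
    have h := hle.trans hdp
    rw [heq, sub_le_iff_le_add] at h
    exact (le_of_add_le_add_left h).trans hconj
  exact (hφ.mono hp0 hpa).trans_lt (hφ.conjugate_lt_top ha hfin p)
end

section
/- Let φ and φ' be two lower semicontinuous traces on a C*-algebra A and let e be a projection in A. Suppose that both φ and φ' take finite values on (eAe)₊ and that φ(x) = φ'(x) for all x ∈ (eAe)₊. Then φ(x) = φ'(x) for all x ∈ (AeA)₊, where AeA denotes the closed two-sided ideal of A generated by e. -/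
open scoped ENNReal NNReal

open Unitization in
/-- If `0 ≤ x ≤ p + ε` in the unitization, then `x = d p d* + ε d d*` for a contraction `d`. -/
lemma exists_conjugate_decomposition {A : Type*} [NonUnitalCStarAlgebra A] [PartialOrder A]
    [StarOrderedRing A] {x p : A} {ε : ℝ} (hx : 0 ≤ x) (hp : 0 ≤ p) (hε : 0 < ε)
    (hxp : (x : Unitization ℂ A) ≤ p + algebraMap ℝ (Unitization ℂ A) ε) :
    ∃ d : A, ‖d‖ ≤ 1 ∧ x = d * p * star d + ε • (d * star d) := by
  set b : Unitization ℂ A := p + algebraMap ℝ (Unitization ℂ A) ε with hb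
  have hx' : (0 : Unitization ℂ A) ≤ x := inr_nonneg_iff.2 hx
  have hp' : (0 : Unitization ℂ A) ≤ p := inr_nonneg_iff.2 hp
  have hbpos : IsStrictlyPositive b := by
    have hεpos : IsStrictlyPositive (algebraMap ℝ (Unitization ℂ A) ε) :=
      (hε.ne'.isUnit.map _).isStrictlyPositive (algebraMap_nonneg _ hε.le)
    exact hεpos.nonneg_add hp'
  set r : Unitization ℂ A := b ^ (-(1 / 2) : ℝ)
  have hsq : CFC.sqrt (x : Unitization ℂ A) = ((CFC.sqrt x : A) : Unitization ℂ A) := by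
    rw [CFC.sqrt_eq_iff _ _ hx' (inr_nonneg_iff.2 (CFC.sqrt_nonneg x)), ← inr_mul,
      CFC.sqrt_mul_sqrt_self x]
  have hd : (((CFC.sqrt (x : Unitization ℂ A)) * r).snd : Unitization ℂ A)
      = CFC.sqrt (x : Unitization ℂ A) * r := by
    ext <;> simp [hsq]
  refine ⟨(CFC.sqrt (x : Unitization ℂ A) * r).snd, ?_, ?_⟩
  · rw [← norm_inr (𝕜 := ℂ), hd]
    exact (le_iff_norm_sqrt_mul_rpow _ _).1 hxp
  · apply inr_injective (R := ℂ)
    have hrb : r * b * r = 1 := CFC.conjugate_rpow_neg_one_half b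
    have hs : star (CFC.sqrt (x : Unitization ℂ A)) = CFC.sqrt (x : Unitization ℂ A) :=
      (IsSelfAdjoint.of_nonneg (CFC.sqrt_nonneg _)).star_eq
    have hr : star r = r := (IsSelfAdjoint.of_nonneg CFC.rpow_nonneg).star_eq
    rw [inr_add, inr_smul, inr_mul, inr_mul, inr_mul, inr_star, hd, star_mul, hs, hr]
    set s := CFC.sqrt (x : Unitization ℂ A)
    calc (x : Unitization ℂ A) = s * (r * b * r) * s := by
          rw [hrb, mul_one, CFC.sqrt_mul_sqrt_self _ hx']
      _ = _ := by
          rw [hb, Algebra.algebraMap_eq_smul_one]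
          simp only [mul_add, add_mul, mul_smul_comm, smul_mul_assoc, mul_one, mul_assoc]

/-- The cone of finite sums of elements `a e a*`. -/
def conjugateCone {A : Type*} [NonUnitalCStarAlgebra A] (e : A) : AddSubmonoid A :=
  AddSubmonoid.closure (Set.range fun a : A ↦ a * e * star a)

section

variable {A : Type*} [NonUnitalCStarAlgebra A] {e : A}

lemma conjugate_mem_conjugateCone (a : A) : a * e * star a ∈ conjugateCone e :=
  AddSubmonoid.subset_closure ⟨a, rfl⟩

lemma conjugateCone_conjugate_mem {p : A} (hp : p ∈ conjugateCone e) (d : A) :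
    d * p * star d ∈ conjugateCone e := by
  induction hp using AddSubmonoid.closure_induction with
  | mem _ h =>
    obtain ⟨a, rfl⟩ := h
    simpa [mul_assoc] using conjugate_mem_conjugateCone (e := e) (d * a)
  | zero => simp
  | add _ _ _ _ h₁ h₂ => simpa [mul_add, add_mul] using add_mem h₁ h₂

lemma conjugate_projection_eq (he₁ : IsSelfAdjoint e) (he₂ : e * e = e) (a : A) :
    a * e * star a = (a * e) * star (a * e) := by
  rw [star_mul, he₁.star_eq, mul_assoc a e (e * star a), ← mul_assoc e e, he₂, mul_assoc]

variable [PartialOrder A] [StarOrderedRing A]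

lemma conjugate_projection_nonneg (he₁ : IsSelfAdjoint e) (he₂ : e * e = e) (a : A) :
    0 ≤ a * e * star a :=
  conjugate_projection_eq he₁ he₂ a ▸ mul_star_self_nonneg _

lemma conjugateCone_nonneg (he₁ : IsSelfAdjoint e) (he₂ : e * e = e) {p : A}
    (hp : p ∈ conjugateCone e) : 0 ≤ p := by
  induction hp using AddSubmonoid.closure_induction with
  | mem _ h =>
    obtain ⟨a, rfl⟩ := h
    exact conjugate_projection_nonneg he₁ he₂ a
  | zero => exact le_rfl
  | add _ _ _ _ h₁ h₂ => exact add_nonneg h₁ h₂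

lemma IsTrace.map_zero {φ : A → ℝ≥0∞} (hφ : IsTrace φ) : φ 0 = 0 := by
  simpa using hφ.smul 0 le_rfl 0

lemma IsTrace.mono_s4 {φ : A → ℝ≥0∞} (hφ : IsTrace φ) {x y : A} (hx : 0 ≤ x) (hxy : x ≤ y) :
    φ x ≤ φ y := by
  rw [← add_sub_cancel x y, hφ.add _ _ hx (sub_nonneg.2 hxy)]
  exact le_self_add

lemma IsTrace.eq_on_conjugateCone {φ φ' : A → ℝ≥0∞} (hφ : IsTrace φ) (hφ' : IsTrace φ')
    (he₁ : IsSelfAdjoint e) (he₂ : e * e = e)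
    (heq : ∀ x : A, 0 ≤ x → (∃ a : A, x = e * a * e) → φ x = φ' x) {p : A}
    (hp : p ∈ conjugateCone e) : φ p = φ' p := by
  induction hp using AddSubmonoid.closure_induction with
  | mem _ h =>
    obtain ⟨a, rfl⟩ := h
    dsimp only
    rw [conjugate_projection_eq he₁ he₂, ← hφ.tracial, ← hφ'.tracial]
    exact heq _ (star_mul_self_nonneg _) ⟨star a * a, by simp [he₁.star_eq, mul_assoc]⟩
  | zero => rw [hφ.map_zero, hφ'.map_zero]
  | add x y hx hy h₁ h₂ =>
    have hx := conjugateCone_nonneg he₁ he₂ hx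
    have hy := conjugateCone_nonneg he₁ he₂ hy
    rw [hφ.add _ _ hx hy, hφ'.add _ _ hx hy, h₁, h₂]

lemma exists_add_star_le_of_mem_span (he₁ : IsSelfAdjoint e) (he₂ : e * e = e) {j : A}
    (hj : j ∈ TwoSidedIdeal.span {e}) : ∃ p ∈ conjugateCone e, j + star j ≤ p := by
  let s : Set A := {y | ∃ a b : A, y = a * e * b}
  have hjs : j ∈ AddSubgroup.closure s := by
    rw [← TwoSidedIdeal.mem_span_iff_mem_addSubgroup_closure_absorbing]
    · refine TwoSidedIdeal.span_mono ?_ hj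
      exact Set.singleton_subset_iff.2 ⟨e, e, by simp [he₂]⟩
    · rintro x _ ⟨a, b, rfl⟩
      exact ⟨x * a, b, by simp [mul_assoc]⟩
    · rintro _ x ⟨a, b, rfl⟩
      exact ⟨a, b * x, by simp [mul_assoc]⟩
  have key (a b : A) : ∃ p ∈ conjugateCone e, a * e * b + star (a * e * b) ≤ p := by
    refine ⟨a * e * star a + star b * e * star (star b),
      add_mem (conjugate_mem_conjugateCone _) (conjugate_mem_conjugateCone _), ?_⟩
    rw [← sub_nonneg]
    convert conjugate_projection_nonneg he₁ he₂ (a - star b) using 1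
    simp only [star_mul, star_sub, star_star, he₁.star_eq, sub_mul, mul_sub, mul_assoc]
    abel
  clear hj
  induction hjs using AddSubgroup.closure_induction'' with
  | mem _ h => obtain ⟨a, b, rfl⟩ := h; exact key a b
  | neg_mem _ h => obtain ⟨a, b, rfl⟩ := h; simpa using key (-a) b
  | zero => exact ⟨0, zero_mem _, by simp⟩
  | add x y _ _ h₁ h₂ =>
    obtain ⟨p, hp, hxp⟩ := h₁
    obtain ⟨q, hq, hyq⟩ := h₂
    refine ⟨p + q, add_mem hp hq, ?_⟩
    rw [star_add, add_add_add_comm]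
    exact add_le_add hxp hyq

lemma exists_mem_conjugateCone_le_near (he₁ : IsSelfAdjoint e) (he₂ : e * e = e) {x : A}
    (hx : 0 ≤ x) (hxI : x ∈ closure (TwoSidedIdeal.span {e} : Set A)) {ε : ℝ} (hε : 0 < ε) :
    ∃ y ∈ conjugateCone e, y ≤ x + x ∧ ‖x + x - y‖ ≤ ε := by
  obtain ⟨j, hj, hxj⟩ := Metric.mem_closure_iff.1 hxI (ε / 2) (half_pos hε)
  rw [dist_eq_norm] at hxj
  obtain ⟨p, hp, hjp⟩ := exists_add_star_le_of_mem_span he₁ he₂ hj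
  have hp0 := conjugateCone_nonneg he₁ he₂ hp
  have hxsa : star x = x := (IsSelfAdjoint.of_nonneg hx).star_eq
  have hle : ((x + x : A) : Unitization ℂ A) ≤ p + algebraMap ℝ (Unitization ℂ A) ε := by
    have hsa : IsSelfAdjoint ((x - j) + star (x - j)) := IsSelfAdjoint.add_star_self _
    have hnorm : ‖(((x - j) + star (x - j) : A) : Unitization ℂ A)‖ ≤ ε := by
      rw [Unitization.norm_inr]
      calc _ ≤ ‖x - j‖ + ‖star (x - j)‖ := norm_add_le _ _
        _ ≤ ε := by rw [norm_star]; linarith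
    have h₁ := (IsSelfAdjoint.le_algebraMap_norm_self (hsa.inr ℂ)).trans
      (algebraMap_mono (Unitization ℂ A) hnorm)
    have h₂ := (Unitization.inr_le_iff _ _ (IsSelfAdjoint.add_star_self j)
      (IsSelfAdjoint.of_nonneg hp0)).2 hjp
    calc ((x + x : A) : Unitization ℂ A)
        = ((j + star j : A) : Unitization ℂ A) +
            (((x - j) + star (x - j) : A) : Unitization ℂ A) := by
          rw [← Unitization.inr_add, star_sub, hxsa]
          congr 1
          abel
      _ ≤ _ := add_le_add h₂ h₁
  obtain ⟨d, hd, hdx⟩ := exists_conjugate_decomposition (add_nonneg hx hx) hp0 hε hle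
  refine ⟨d * p * star d, conjugateCone_conjugate_mem hp d, ?_, ?_⟩
  · rw [hdx]
    exact le_add_of_nonneg_right (smul_nonneg hε.le (mul_star_self_nonneg d))
  · rw [hdx, add_sub_cancel_left, norm_smul, Real.norm_of_nonneg hε.le,
      CStarRing.norm_self_mul_star]
    exact mul_le_of_le_one_right hε.le (mul_le_one₀ hd (norm_nonneg _) hd)

lemma IsLSC.le_of_mem_closure {φ φ' : A → ℝ≥0∞} (hφl : IsLSC φ) (hφ' : IsTrace φ')
    {z : A} (hz : z ∈ closure {y : A | 0 ≤ y ∧ y ≤ z ∧ φ y = φ' y}) : φ z ≤ φ' z := by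
  by_cases htop : φ' z = ∞
  · simp [htop]
  · have hmem := closure_minimal (t := {y : A | 0 ≤ y ∧ φ y ≤ ((φ' z).toNNReal : ℝ≥0∞)}) ?_
      (hφl _) hz
    · simpa [ENNReal.coe_toNNReal htop] using hmem.2
    · rintro y ⟨hy, hyz, hyφ⟩
      exact ⟨hy, by rw [ENNReal.coe_toNNReal htop, hyφ]; exact hφ'.mono_s4 hy hyz⟩

end

/-- Let `φ` and `φ'` be two lower semicontinuous traces on a C*-algebra `A` and `e` a
projection in `A`. If both are finite on `(eAe)₊` and agree there, then they agree on the
positive part of the closed two-sided ideal `AeA` generated by `e`. -/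
theorem traces_eq_on_ideal_of_eq_on_corner {A : Type*} [NonUnitalCStarAlgebra A]
    [PartialOrder A] [StarOrderedRing A]
    (φ φ' : A → ℝ≥0∞) (hφ : IsTrace φ) (hφl : IsLSC φ) (hφ' : IsTrace φ') (hφ'l : IsLSC φ')
    (e : A) (he₁ : IsSelfAdjoint e) (he₂ : e * e = e)
    (hfin : ∀ x : A, 0 ≤ x → (∃ a : A, x = e * a * e) → φ x < ∞ ∧ φ' x < ∞)
    (heq : ∀ x : A, 0 ≤ x → (∃ a : A, x = e * a * e) → φ x = φ' x)
    (x : A) (hx : 0 ≤ x) (hxI : x ∈ closure (TwoSidedIdeal.span {e} : Set A)) :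
    φ x = φ' x := by
  have hz (ψ ψ' : A → ℝ≥0∞) (h : ∀ p ∈ conjugateCone e, ψ p = ψ' p) :
      x + x ∈ closure {y : A | 0 ≤ y ∧ y ≤ x + x ∧ ψ y = ψ' y} := by
    refine Metric.mem_closure_iff.2 fun ε hε ↦ ?_
    obtain ⟨y, hy, hyx, hnorm⟩ := exists_mem_conjugateCone_le_near he₁ he₂ hx hxI (half_pos hε)
    refine ⟨y, ⟨conjugateCone_nonneg he₁ he₂ hy, hyx, h y hy⟩, ?_⟩
    rw [dist_eq_norm]
    linarith
  have hcone (p : A) (hp : p ∈ conjugateCone e) : φ p = φ' p :=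
    hφ.eq_on_conjugateCone hφ' he₁ he₂ heq hp
  have hdouble : φ (x + x) = φ' (x + x) :=
    le_antisymm (hφl.le_of_mem_closure hφ' (hz φ φ' hcone))
      (hφ'l.le_of_mem_closure hφ (hz φ' φ fun p hp ↦ (hcone p hp).symm))
  rw [hφ.add x x hx hx, hφ'.add x x hx hx, ← two_mul, ← two_mul] at hdouble
  exact (ENNReal.mul_right_inj (by simp) (by simp)).1 hdouble
end

section
/- Let φ and φ' be two lower semicontinuous traces on a C*-algebra A and let e be a projection in A. Suppose that both φ and φ' take finite values on (eAe)₊ and that φ(x) = φ'(x) for all x ∈ (eAe)₊. Then for any a, b ∈ A such that the element x = a e b is positive, one has φ(x) = φ'(x). -/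
open scoped ENNReal NNReal

/-- A trace takes the same value at `star u * u` as at an element of the corner `e A e`
whenever `u = e * w`. -/
lemma IsTrace.star_mul_self_corner {A : Type*} [NonUnitalCStarAlgebra A] [PartialOrder A]
    [StarOrderedRing A] {φ : A → ℝ≥0∞} (hφ : IsTrace φ) {e : A} (he : IsSelfAdjoint e) (w : A) :
    φ (star (e * w) * (e * w)) = φ (e * (w * star w) * e) := by
  rw [hφ.tracial, star_mul, he.star_eq]
  simp only [mul_assoc]

/-- Polarization for a self-adjoint element of the form `a * e * b`, with `e` a projection. -/
lemma four_smul_add_star_mul_self_eq {A : Type*} [NonUnitalCStarAlgebra A] {e a b : A}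
    (he₁ : IsSelfAdjoint e) (he₂ : e * e = e) (hx : IsSelfAdjoint (a * e * b)) :
    ((4 : ℝ≥0) : ℝ) • (a * e * b) + star (e * (star a - b)) * (e * (star a - b)) =
      star (e * (star a + b)) * (e * (star a + b)) := by
  have hee (y : A) : e * (e * y) = e * y := by rw [← mul_assoc, he₂]
  have h : star b * (e * star a) = a * (e * b) := by
    simpa [he₁.star_eq, mul_assoc] using hx.star_eq
  have h4 : ((4 : ℝ≥0) : ℝ) • (a * (e * b)) = (4 : ℕ) • (a * (e * b)) := by
    rw [← Nat.cast_smul_eq_nsmul ℝ]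
    norm_num
  simp only [star_mul, star_sub, star_add, star_star, he₁.star_eq, mul_assoc, hee, mul_add,
    mul_sub, add_mul, sub_mul, h, h4]
  abel

/-- Let `φ` and `φ'` be two lower semicontinuous traces on a C*-algebra `A` and `e` a
projection in `A`. If both are finite on `(eAe)₊` and agree there, then for any `a, b ∈ A`
such that `a * e * b` is positive, `φ (a * e * b) = φ' (a * e * b)`. -/
theorem traces_eq_on_aeb_of_eq_on_corner {A : Type*} [NonUnitalCStarAlgebra A]
    [PartialOrder A] [StarOrderedRing A]
    (φ φ' : A → ℝ≥0∞) (hφ : IsTrace φ) (hφl : IsLSC φ) (hφ' : IsTrace φ') (hφ'l : IsLSC φ')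
    (e : A) (he₁ : IsSelfAdjoint e) (he₂ : e * e = e)
    (hfin : ∀ x : A, 0 ≤ x → (∃ a : A, x = e * a * e) → φ x < ∞ ∧ φ' x < ∞)
    (heq : ∀ x : A, 0 ≤ x → (∃ a : A, x = e * a * e) → φ x = φ' x)
    (a b : A) (hpos : 0 ≤ a * e * b) :
    φ (a * e * b) = φ' (a * e * b) := by
  have hcorner (w : A) : 0 ≤ e * (w * star w) * e := by
    simpa [he₁.star_eq, mul_assoc] using mul_star_self_nonneg (e * w)
  have hsplit {ψ : A → ℝ≥0∞} (hψ : IsTrace ψ) :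
      4 * ψ (a * e * b) + ψ (e * ((star a - b) * star (star a - b)) * e) =
        ψ (e * ((star a + b) * star (star a + b)) * e) := by
    have h4 : ψ (((4 : ℝ≥0) : ℝ) • (a * e * b)) = 4 * ψ (a * e * b) := by
      simpa using hψ.smul _ hpos 4
    rw [← hψ.star_mul_self_corner he₁, ← hψ.star_mul_self_corner he₁, ← h4,
      ← hψ.add _ _ (smul_nonneg (NNReal.coe_nonneg 4) hpos) (star_mul_self_nonneg _),
      four_smul_add_star_mul_self_eq he₁ he₂ (IsSelfAdjoint.of_nonneg hpos)]
  have h := (hsplit hφ).trans ((heq _ (hcorner _) ⟨_, rfl⟩).trans (hsplit hφ').symm)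
  rw [← heq _ (hcorner (star a - b)) ⟨_, rfl⟩,
    ENNReal.add_left_inj (hfin _ (hcorner _) ⟨_, rfl⟩).1.ne] at h
  exact (ENNReal.mul_right_inj (by norm_num) (by norm_num)).1 h
end

section
/- Let A be a C*-algebra with the ideal property and let φ be a lower semicontinuous trace on A. Let I be the closed two-sided ideal of A generated by the set of projections e ∈ A with φ(e) < ∞. Then φ(x) = +∞ for every positive x ∈ A that does not belong to I. -/
open scoped ENNReal NNReal

/-- A C*-algebra has the ideal property if every closed two-sided ideal is generated, as a
closed two-sided ideal, by the projections it contains. -/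
def IdealProperty (A : Type*) [NonUnitalCStarAlgebra A] [PartialOrder A]
    [StarOrderedRing A] : Prop :=
  ∀ I : TwoSidedIdeal A, IsClosed (I : Set A) →
    (I : Set A) =
      closure (TwoSidedIdeal.span {p : A | p ∈ I ∧ IsSelfAdjoint p ∧ p * p = p} : Set A)

namespace IsTrace

variable {A : Type*} [NonUnitalCStarAlgebra A] [PartialOrder A] [StarOrderedRing A]
  {φ : A → ℝ≥0∞}

theorem mono_s8 (hφ : IsTrace φ) {a b : A} (ha : 0 ≤ a) (hab : a ≤ b) : φ a ≤ φ b := by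
  have h := hφ.add a (b - a) ha (sub_nonneg.2 hab)
  rw [add_sub_cancel] at h
  exact h ▸ le_self_add

theorem lt_top_of_le_smul (hφ : IsTrace φ) {a b : A} (ha : 0 ≤ a) (hb : 0 ≤ b) {r : ℝ}
    (hr : 0 ≤ r) (hab : a ≤ r • b) (hb' : φ b < ∞) : φ a < ∞ := by
  refine (hφ.mono_s8 ha hab).trans_lt ?_
  lift r to ℝ≥0 using hr
  rw [hφ.smul b hb r]
  exact ENNReal.mul_lt_top ENNReal.coe_lt_top hb'

end IsTrace

section

variable {A : Type*} [NonUnitalCStarAlgebra A] [PartialOrder A] [StarOrderedRing A]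

theorem star_add_mul_add_le (y z : A) :
    star (y + z) * (y + z) ≤ (2 : ℝ) • (star y * y + star z * z) := by
  have h := star_mul_self_nonneg (y - z)
  rw [← sub_nonneg]
  convert h using 1
  simp only [star_add, star_sub, two_smul]
  noncomm_ring

theorem star_mul_mul_mul_le (a y : A) :
    star (a * y) * (a * y) ≤ ‖star a * a‖ • (star y * y) := by
  have h := CStarAlgebra.star_left_conjugate_le_norm_smul (a := y)
    (b := star a * a) (IsSelfAdjoint.star_mul_self a)
  simpa only [star_mul, mul_assoc] using h

/-- The elements that are square-summable for a trace form a two-sided ideal. -/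
def IsTrace.squareIdeal {φ : A → ℝ≥0∞} (hφ : IsTrace φ) : TwoSidedIdeal A :=
  have mul_left {a y : A} (hy : φ (star y * y) < ∞) : φ (star (a * y) * (a * y)) < ∞ :=
    hφ.lt_top_of_le_smul (star_mul_self_nonneg _) (star_mul_self_nonneg _) (norm_nonneg _)
      (star_mul_mul_mul_le a y) hy
  TwoSidedIdeal.mk' {y : A | φ (star y * y) < ∞}
    (by
      have h := hφ.smul 0 le_rfl 0
      simp_all)
    (fun {y z} hy hz => by
      refine hφ.lt_top_of_le_smul (star_mul_self_nonneg _)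
        (add_nonneg (star_mul_self_nonneg _) (star_mul_self_nonneg _)) zero_le_two
        (star_add_mul_add_le y z) ?_
      rw [hφ.add _ _ (star_mul_self_nonneg _) (star_mul_self_nonneg _)]
      exact ENNReal.add_lt_top.2 ⟨hy, hz⟩)
    (fun {y} hy => by simpa using hy)
    (fun {a y} hy => mul_left hy)
    (fun {y a} hy => by
      have hy' : φ (star (star y) * star y) < ∞ := by
        rw [star_star, ← hφ.tracial]
        exact hy
      have h := mul_left (a := star a) hy'
      rw [← star_mul, star_star, ← hφ.tracial] at h
      exact h)

theorem IsTrace.mem_squareIdeal {φ : A → ℝ≥0∞} (hφ : IsTrace φ) {y : A} :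
    y ∈ hφ.squareIdeal ↔ φ (star y * y) < ∞ := by
  simp [IsTrace.squareIdeal, TwoSidedIdeal.mem_mk']

theorem IsTrace.mem_squareIdeal_of_nonneg {φ : A → ℝ≥0∞} (hφ : IsTrace φ) {x : A}
    (hx : 0 ≤ x) (h : φ x < ∞) : x ∈ hφ.squareIdeal := by
  obtain ⟨b, rfl⟩ := CStarAlgebra.nonneg_iff_eq_star_mul_self.1 hx
  exact hφ.squareIdeal.mul_mem_left _ _ (hφ.mem_squareIdeal.2 h)

/-- A projection `e` that is close to `y` is dominated by a multiple of `(y e)* (y e)`. -/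
theorem le_four_smul_star_mul_of_norm_sub_le {e y : A} (he : IsSelfAdjoint e) (hee : e * e = e)
    (hy : ‖e - y‖ ≤ 1 / 2) : e ≤ (4 : ℝ) • (star (y * e) * (y * e)) := by
  have hse : star e * e = e := by rw [he.star_eq, hee]
  have he0 : 0 ≤ e := hse ▸ star_mul_self_nonneg e
  have h₁ := star_add_mul_add_le (y * e) ((e - y) * e)
  rw [← add_mul, add_sub_cancel, hee, hse] at h₁
  have h₂ := star_mul_mul_mul_le (e - y) e
  rw [hse, CStarRing.norm_star_mul_self] at h₂
  have h₃ : (‖e - y‖ * ‖e - y‖) • e ≤ (1 / 4 : ℝ) • e :=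
    smul_le_smul_of_nonneg_right (by nlinarith [norm_nonneg (e - y)]) he0
  have h₄ : e ≤ (2 : ℝ) • (star (y * e) * (y * e) + (1 / 4 : ℝ) • e) :=
    h₁.trans (smul_le_smul_of_nonneg_left (by gcongr; exact h₂.trans h₃) zero_le_two)
  have h₅ := smul_le_smul_of_nonneg_left (sub_nonneg.2 h₄) (zero_le_two (α := ℝ))
  rw [smul_zero] at h₅
  rw [← sub_nonneg]
  convert h₅ using 1
  module

theorem IsTrace.lt_top_of_mem_closure_squareIdeal {φ : A → ℝ≥0∞} (hφ : IsTrace φ) {e : A}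
    (he : IsSelfAdjoint e) (hee : e * e = e) (h : e ∈ closure (hφ.squareIdeal : Set A)) :
    φ e < ∞ := by
  obtain ⟨y, hy, hey⟩ := Metric.mem_closure_iff.1 h (1 / 2) (by norm_num)
  rw [dist_eq_norm] at hey
  have he0 : 0 ≤ e := by simpa [he.star_eq, hee] using star_mul_self_nonneg e
  exact hφ.lt_top_of_le_smul he0 (star_mul_self_nonneg _) zero_le_four
    (le_four_smul_star_mul_of_norm_sub_le he hee hey.le)
    (hφ.mem_squareIdeal.1 (hφ.squareIdeal.mul_mem_right _ _ hy))

end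

/-- The topological closure of a two-sided ideal. -/
def TwoSidedIdeal.topologicalClosure {R : Type*} [NonUnitalNonAssocRing R] [TopologicalSpace R]
    [IsTopologicalRing R] (I : TwoSidedIdeal R) : TwoSidedIdeal R :=
  TwoSidedIdeal.mk' (closure (I : Set R)) (subset_closure I.zero_mem)
    (fun hx hy => map_mem_closure₂ continuous_add hx hy fun _ ha _ hb => I.add_mem ha hb)
    (fun hx => map_mem_closure continuous_neg hx fun _ ha => I.neg_mem ha)
    (fun {a _} hy => map_mem_closure (continuous_const_mul a) hy fun _ hb => I.mul_mem_left _ _ hb)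
    (fun {_ b} hx => map_mem_closure (f := (· * b)) (continuous_mul_const b) hx fun _ ha => I.mul_mem_right _ _ ha)

theorem TwoSidedIdeal.coe_topologicalClosure {R : Type*} [NonUnitalNonAssocRing R]
    [TopologicalSpace R] [IsTopologicalRing R] (I : TwoSidedIdeal R) :
    (I.topologicalClosure : Set R) = closure (I : Set R) := by
  simp [TwoSidedIdeal.topologicalClosure]

/-- Let `A` be a C*-algebra with the ideal property and `φ` a lower semicontinuous trace
on `A`. If `I` is the closed two-sided ideal generated by the projections `e` with
`φ e < ∞`, then `φ x = ∞` for every positive `x ∉ I`. -/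
theorem trace_eq_top_of_not_mem_ideal {A : Type*} [NonUnitalCStarAlgebra A] [PartialOrder A]
    [StarOrderedRing A] (hA : IdealProperty A)
    (φ : A → ℝ≥0∞) (hφ : IsTrace φ) (hφl : IsLSC φ)
    (x : A) (hx : 0 ≤ x)
    (hxI : x ∉ closure
      (TwoSidedIdeal.span {e : A | IsSelfAdjoint e ∧ e * e = e ∧ φ e < ∞} : Set A)) :
    φ x = ∞ := by
  by_contra h
  have hle : TwoSidedIdeal.span {x} ≤ hφ.squareIdeal := by
    rw [TwoSidedIdeal.span_le, Set.singleton_subset_iff]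
    exact hφ.mem_squareIdeal_of_nonneg hx (lt_top_iff_ne_top.2 h)
  let J := (TwoSidedIdeal.span {x}).topologicalClosure
  have hJ : (J : Set A) = closure (TwoSidedIdeal.span {x} : Set A) :=
    TwoSidedIdeal.coe_topologicalClosure _
  have hxJ : x ∈ (J : Set A) :=
    hJ ▸ subset_closure (TwoSidedIdeal.subset_span (Set.mem_singleton x))
  rw [hA J (hJ ▸ isClosed_closure)] at hxJ
  refine hxI (closure_mono (TwoSidedIdeal.span_mono ?_) hxJ)
  rintro e ⟨heJ, he, hee⟩
  rw [← SetLike.mem_coe, hJ] at heJ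
  exact ⟨he, hee, hφ.lt_top_of_mem_closure_squareIdeal he hee (closure_mono hle heJ)⟩
end

section
/- Let A be a C*-algebra, let I be a closed two-sided ideal of A, and let φ be a lower semicontinuous trace on A. Define τ on A₊ by τ(x) = φ(x) if x ∈ I and τ(x) = +∞ if x ∉ I. Then τ is a lower semicontinuous trace on A. -/
open scoped ENNReal NNReal Classical

/-- A closed two-sided ideal contains every `x` whose `star x * x` is dominated by a positive
element of the ideal. -/
theorem TwoSidedIdeal.mem_of_star_mul_self_le {A : Type*} [NonUnitalCStarAlgebra A]
    [PartialOrder A] [StarOrderedRing A] {I : TwoSidedIdeal A} (hI : IsClosed (I : Set A))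
    {x b : A} (hb : b ∈ I) (hb₀ : 0 ≤ b) (hxb : star x * x ≤ b) : x ∈ I := by
  rw [← SetLike.mem_coe, ← hI.closure_eq, Metric.mem_closure_iff]
  intro ε hε
  obtain ⟨δ, hδ, hδε⟩ : ∃ δ : ℝ, 0 < δ ∧ δ < ε ^ 2 := exists_between (by positivity)
  have hsa : IsSelfAdjoint b := hb₀.isSelfAdjoint
  have hden (t : ℝ) : t ^ 2 + δ ^ 2 ≠ 0 := by positivity
  let h : ℝ → ℝ := fun t ↦ t / (t ^ 2 + δ ^ 2)
  have hh : Continuous h := by fun_prop (disch := exact hden _)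
  have hh₀ : h 0 = 0 := by simp [h]
  -- `g` is the approximate unit `b² / (b² + δ²)`, which lies in `I`.
  let g : A := b * cfcₙ h b
  have hgI : g ∈ I := I.mul_mem_right _ _ hb
  have hg : g = cfcₙ (fun t ↦ t * h t) b := by
    rw [cfcₙ_mul (fun t ↦ t) h b, cfcₙ_id' ℝ b]
  have hg_sa : star g = g := by rw [hg]; exact (cfcₙ_predicate _ b : IsSelfAdjoint _).star_eq
  have hgb : g * b = cfcₙ (fun t ↦ t * h t * t) b := by
    rw [cfcₙ_mul (fun t ↦ t * h t) (fun t ↦ t) b, cfcₙ_id' ℝ b, hg]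
  have hbgb : b - g * b = cfcₙ (fun t ↦ t - t * h t * t) b := by
    rw [cfcₙ_sub (fun t ↦ t) (fun t ↦ t * h t * t) b, cfcₙ_id' ℝ b, hgb]
  have hbgbg : (b - g * b) * g = cfcₙ (fun t ↦ (t - t * h t * t) * (t * h t)) b := by
    rw [cfcₙ_mul (fun t ↦ t - t * h t * t) (fun t ↦ t * h t) b, hbgb, hg]
  have hres : (b - g * b) - (b - g * b) * g =
      cfcₙ (fun t ↦ (t - t * h t * t) - (t - t * h t * t) * (t * h t)) b := by
    rw [cfcₙ_sub (fun t ↦ t - t * h t * t) (fun t ↦ (t - t * h t * t) * (t * h t)) b,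
      hbgbg, hbgb]
  have hnorm : ‖(b - g * b) - (b - g * b) * g‖ ≤ δ := by
    rw [hres]
    refine norm_cfcₙ_le fun t _ ↦ ?_
    have heq : (t - t * h t * t) - (t - t * h t * t) * (t * h t) =
        δ ^ 4 * t / (t ^ 2 + δ ^ 2) ^ 2 := by
      have := hden t
      simp only [h]
      field_simp
      ring
    rw [heq, Real.norm_eq_abs, abs_div, abs_mul, abs_of_pos (pow_pos hδ 4),
      abs_of_nonneg (sq_nonneg (t ^ 2 + δ ^ 2)), div_le_iff₀ (by positivity), ← sq_abs t]
    have h₁ : δ * |t| ≤ |t| ^ 2 + δ ^ 2 := by nlinarith [sq_nonneg (|t| - δ), abs_nonneg t]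
    have h₂ : δ ^ 2 ≤ |t| ^ 2 + δ ^ 2 := by nlinarith [sq_nonneg |t|]
    calc δ ^ 4 * |t| = δ * ((δ * |t|) * δ ^ 2) := by ring
      _ ≤ δ * ((|t| ^ 2 + δ ^ 2) * (|t| ^ 2 + δ ^ 2)) := by gcongr
      _ = δ * (|t| ^ 2 + δ ^ 2) ^ 2 := by ring
  have hexp (y : A) : star (y - y * g) * (y - y * g) =
      (star y * y - g * (star y * y)) - (star y * y - g * (star y * y)) * g := by
    rw [star_sub, star_mul, hg_sa]
    noncomm_ring
  have hle : star (x - x * g) * (x - x * g) ≤ (b - g * b) - (b - g * b) * g := by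
    obtain ⟨s, hs⟩ := CStarAlgebra.nonneg_iff_eq_star_mul_self.mp (sub_nonneg.mpr hxb)
    rw [← sub_nonneg, hexp]
    convert star_mul_self_nonneg (s - s * g) using 1
    rw [hexp, ← hs]
    noncomm_ring
  refine ⟨x * g, I.mul_mem_left _ _ hgI, ?_⟩
  rw [dist_eq_norm]
  refine lt_of_pow_lt_pow_left₀ 2 hε.le ?_
  calc ‖x - x * g‖ ^ 2 = ‖star (x - x * g) * (x - x * g)‖ := by
        rw [CStarRing.norm_star_mul_self, sq]
    _ ≤ ‖(b - g * b) - (b - g * b) * g‖ :=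
        CStarAlgebra.norm_le_norm_of_nonneg_of_le (star_mul_self_nonneg _) hle
    _ ≤ δ := hnorm
    _ < ε ^ 2 := hδε

/-- In a closed two-sided ideal, membership of `x` is detected by `star x * x`. -/
theorem TwoSidedIdeal.mem_of_star_mul_self_mem {A : Type*} [NonUnitalCStarAlgebra A]
    [PartialOrder A] [StarOrderedRing A] {I : TwoSidedIdeal A} (hI : IsClosed (I : Set A))
    {x : A} (hx : star x * x ∈ I) : x ∈ I :=
  mem_of_star_mul_self_le hI hx (star_mul_self_nonneg x) le_rfl

/-- A closed two-sided ideal is hereditary. -/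
theorem TwoSidedIdeal.mem_of_nonneg_of_le {A : Type*} [NonUnitalCStarAlgebra A]
    [PartialOrder A] [StarOrderedRing A] {I : TwoSidedIdeal A} (hI : IsClosed (I : Set A))
    {x b : A} (hb : b ∈ I) (hx : 0 ≤ x) (hxb : x ≤ b) : x ∈ I := by
  obtain ⟨s, rfl⟩ := CStarAlgebra.nonneg_iff_eq_star_mul_self.mp hx
  exact I.mul_mem_left _ _ (mem_of_star_mul_self_le hI hb (hx.trans hxb) hxb)

/-- A closed two-sided ideal is stable under real scalar multiplication. -/
theorem TwoSidedIdeal.real_smul_mem {A : Type*} [NonUnitalCStarAlgebra A]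
    [PartialOrder A] [StarOrderedRing A] {I : TwoSidedIdeal A} (hI : IsClosed (I : Set A))
    (c : ℝ) {x : A} (hx : x ∈ I) : c • x ∈ I := by
  refine mem_of_star_mul_self_mem hI ?_
  rw [mul_smul_comm, ← smul_mul_assoc]
  exact I.mul_mem_left _ _ hx

/-- Let `A` be a C*-algebra, `I` a closed two-sided ideal of `A`, and `φ` a lower
semicontinuous trace on `A`. Then `τ`, defined by `τ x = φ x` for `x ∈ I` and `τ x = ∞`
otherwise, is a lower semicontinuous trace on `A`. -/
theorem extendByTop_isTrace_isLSC {A : Type*} [NonUnitalCStarAlgebra A] [PartialOrder A]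
    [StarOrderedRing A] (I : TwoSidedIdeal A) (hI : IsClosed (I : Set A))
    (φ : A → ℝ≥0∞) (hφ : IsTrace φ) (hφl : IsLSC φ) :
    IsTrace (fun x : A => if x ∈ I then φ x else ∞) ∧
      IsLSC (fun x : A => if x ∈ I then φ x else ∞) := by
  refine ⟨⟨fun x hx α ↦ ?_, fun x y hx hy ↦ ?_, fun x ↦ ?_⟩, fun α ↦ ?_⟩
  · rcases eq_or_ne α 0 with rfl | hα
    · have h₀ : φ 0 = 0 := by simpa using hφ.smul 0 le_rfl 0
      simp [h₀, I.zero_mem]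
    · have hα' : (α : ℝ) ≠ 0 := by exact_mod_cast hα
      have hiff : (α : ℝ) • x ∈ I ↔ x ∈ I :=
        ⟨fun h ↦ by simpa [smul_smul, hα'] using I.real_smul_mem hI (α : ℝ)⁻¹ h,
          I.real_smul_mem hI _⟩
      by_cases h : x ∈ I
      · simp [hiff, h, hφ.smul x hx α]
      · simp [hiff, h, ENNReal.mul_top, hα]
  · by_cases h : x + y ∈ I
    · have hxI : x ∈ I := I.mem_of_nonneg_of_le hI h hx (le_add_of_nonneg_right hy)
      have hyI : y ∈ I := I.mem_of_nonneg_of_le hI h hy (le_add_of_nonneg_left hx)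
      simp [h, hxI, hyI, hφ.add x y hx hy]
    · by_cases hxI : x ∈ I
      · have hyI : y ∉ I := fun hyI ↦ h (I.add_mem hxI hyI)
        simp [h, hyI]
      · simp [h, hxI]
  · have hiff : star x * x ∈ I ↔ x * star x ∈ I := by
      refine ⟨fun h ↦ I.mul_mem_right _ _ (I.mem_of_star_mul_self_mem hI h), fun h ↦ ?_⟩
      exact I.mul_mem_right _ _ (I.mem_of_star_mul_self_mem hI (by rwa [star_star]))
    simp only [hiff, hφ.tracial x]
  · convert (hφl α).inter hI using 1
    ext x
    by_cases h : x ∈ I <;> simp [h]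
end
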